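/- arXiv:2502.20297 — 5 statements merged into one kernel-verified Lean document; each statement's English description precedes it below -/
import Mathlib

section
/- Let C and D be chain complexes of vector spaces over 𝔽₂ = ZMod 2 (indexed by ℕ), let τ : C ⟶ D and π : D ⟶ C be chain maps, and let Γ be a finite group of odd order t acting on D by chain-complex automorphisms γ ↦ γ_#. Assume π ∘ γ_# = π for every γ ∈ Γ, π ∘ τ = t • 𝟙_C, and τ ∘ π = ∑_{γ ∈ Γ} γ_#. If for some n the induced map H_n(τ) : H_n(C) → H_n(D) is surjective, then every homology class of D in degree n is Γ-invariant: for all α ∈ H_n(D) and all γ ∈ Γ, H_n(γ_#)(α) = α. -/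
/-!
In homology over `𝔽₂`, the relation `τ ≫ π = t • 𝟙` with `t` odd says `π_* ∘ τ_* = id`. Surjectivity
of `τ_*` upgrades `π_*` to a two-sided inverse, so in particular `π_*` is injective. Since
`π_* ∘ γ_* = π_*`, the classes `γ_* α` and `α` have the same image under `π_*`, hence agree.
-/

open CategoryTheory

/-- If in the transfer setting (Galois lift of odd index `t`) the induced map `H_n(τ)` is
surjective, then every degree-`n` homology class of `D` is invariant under the `Γ`-action. -/
theorem transfer_homology_surjective_invariant
    (C D : ChainComplex (ModuleCat (ZMod 2)) ℕ)
    (τ : C ⟶ D) (π : D ⟶ C)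
    (Γ : Type) [Group Γ] [Fintype Γ]
    (t : ℕ) (ht : Odd t) (hcard : Fintype.card Γ = t)
    (ρ : Γ →* Aut D)
    (h1 : ∀ γ : Γ, (ρ γ).hom ≫ π = π)
    (h2 : τ ≫ π = t • 𝟙 C)
    (h3 : π ≫ τ = ∑ γ : Γ, (ρ γ).hom)
    (n : ℕ)
    (hsurj : Function.Surjective (HomologicalComplex.homologyMap τ n)) :
    ∀ (α : D.homology n) (γ : Γ),
      HomologicalComplex.homologyMap (ρ γ).hom n α = α := by
  intro α γ
  have hπτ : ∀ c, HomologicalComplex.homologyMap π n (HomologicalComplex.homologyMap τ n c) = c := by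
    intro c
    have htwo : (t : ZMod 2) = 1 := ZMod.natCast_eq_one_iff_odd.mpr ht
    have hid : HomologicalComplex.homologyMap τ n ≫ HomologicalComplex.homologyMap π n =
        t • 𝟙 (C.homology n) := by
      rw [← HomologicalComplex.homologyMap_comp, h2,
        ← HomologicalComplex.homologyMap_id]
      exact (HomologicalComplex.homologyFunctor _ _ n).map_nsmul
    rw [← ModuleCat.comp_apply, hid]
    change t • c = c
    rw [← Nat.cast_smul_eq_nsmul (ZMod 2), htwo, one_smul]
  have hinj : Function.Injective (HomologicalComplex.homologyMap π n) := by
    intro x y hxy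
    obtain ⟨a, rfl⟩ := hsurj x
    obtain ⟨b, rfl⟩ := hsurj y
    rw [hπτ, hπτ] at hxy
    rw [hxy]
  apply hinj
  rw [← ModuleCat.comp_apply, ← HomologicalComplex.homologyMap_comp, h1]
end

section
/- Let I and Ĩ be finite types, t an odd natural number, and p : Ĩ → I a map each of whose fibers has exactly t elements; define π : (Ĩ → 𝔽₂) → (I → 𝔽₂) by (π x) i = ∑_{j ∈ p⁻¹(i)} x j and τ : (I → 𝔽₂) → (Ĩ → 𝔽₂) by (τ y) j = y (p j). Let (C_X, C_Z) be a CSS code on I → 𝔽₂ and (C̃_X, C̃_Z) a CSS code on Ĩ → 𝔽₂. Assume τ(C_X) ⊆ C̃_X, τ(C_Z^⊥) ⊆ C̃_Z^⊥, and π(C̃_Z^⊥) ⊆ C_Z^⊥. Then τ induces a well-defined injective 𝔽₂-linear map from the quotient C_X ⧸ C_Z^⊥ to the quotient C̃_X ⧸ C̃_Z^⊥; in particular, the dimension k = finrank(C_X ⧸ C_Z^⊥) of the base CSS code is at most the dimension k̃ = finrank(C̃_X ⧸ C̃_Z^⊥) of the lifted CSS code. -/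
/-! Every fiber of `p` has `t` elements with `t` odd, so `π (τ y) = t • y = y` over `𝔽₂`
(`fiberSum_pullback'`): the fiberwise sum is a left inverse of the pullback. The two hypotheses on
`τ` make the induced map on quotients well defined, and it is injective because `τ x ∈ C̃_Z^⊥`
gives `x = π (τ x) ∈ C_Z^⊥`. Comparing dimensions along this injection gives the bound. -/

/-- The fiberwise-sum map `π : (Ĩ → 𝔽₂) → (I → 𝔽₂)`, `(π x) i = ∑_{j ∈ p⁻¹(i)} x j`. -/
def fiberSum {I J : Type*} [Fintype J] [DecidableEq I] (p : J → I) :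
    (J → ZMod 2) →ₗ[ZMod 2] (I → ZMod 2) where
  toFun x := fun i => ∑ j ∈ Finset.univ.filter (fun j => p j = i), x j
  map_add' x y := by
    funext i
    simp [Finset.sum_add_distrib]
  map_smul' c x := by
    funext i
    simp [Finset.mul_sum]

/-- The pullback map `τ : (I → 𝔽₂) → (Ĩ → 𝔽₂)`, `(τ y) j = y (p j)`. -/
def pullback' {I J : Type*} (p : J → I) :
    (I → ZMod 2) →ₗ[ZMod 2] (J → ZMod 2) where
  toFun y := fun j => y (p j)
  map_add' _ _ := rfl
  map_smul' _ _ := rfl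

/-- The dual code of a linear code `C ⊆ I → 𝔽₂` with respect to the standard dot product. -/
def dualCode {I : Type*} [Fintype I] (C : Submodule (ZMod 2) (I → ZMod 2)) :
    Submodule (ZMod 2) (I → ZMod 2) where
  carrier := {x | ∀ c ∈ C, ∑ i, x i * c i = 0}
  zero_mem' := by intro c hc; simp
  add_mem' := by
    intro x y hx hy c hc
    simp [add_mul, Finset.sum_add_distrib, hx c hc, hy c hc]
  smul_mem' := by
    intro a x hx c hc
    simp only [Pi.smul_apply, smul_eq_mul, mul_assoc, ← Finset.mul_sum]
    rw [hx c hc, mul_zero]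

/-- The composite `π ∘ τ` is multiplication by the fiber size, hence the identity over `𝔽₂` when
that size is odd. -/
theorem fiberSum_pullback' {I J : Type*} [Fintype J] [DecidableEq I] {t : ℕ} (ht : Odd t)
    (p : J → I) (hfib : ∀ i : I, (Finset.univ.filter (fun j => p j = i)).card = t)
    (y : I → ZMod 2) : fiberSum p (pullback' p y) = y := by
  funext i
  change ∑ j ∈ Finset.univ.filter (fun j => p j = i), y (p j) = y i
  rw [Finset.sum_congr rfl (fun j hj => by rw [(Finset.mem_filter.mp hj).2]),
    Finset.sum_const, hfib, nsmul_eq_mul, ZMod.natCast_eq_one_iff_odd.mpr ht, one_mul]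

/-- Dimension bound for lifted CSS codes: under a Galois lift of odd index `t`, the pullback
`τ` induces a well-defined injective linear map `C_X ⧸ C_Z^⊥ → C̃_X ⧸ C̃_Z^⊥`; in particular
the dimension of the base CSS code is at most that of the lifted CSS code. -/
theorem cssLift_dimension_le
    {I J : Type*} [Fintype I] [Fintype J] [DecidableEq I]
    (t : ℕ) (ht : Odd t) (p : J → I)
    (hfib : ∀ i : I, (Finset.univ.filter (fun j => p j = i)).card = t)
    (CX CZ : Submodule (ZMod 2) (I → ZMod 2))
    (CXt CZt : Submodule (ZMod 2) (J → ZMod 2))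
    (hCSS : dualCode CX ≤ CZ)
    (hCSSt : dualCode CXt ≤ CZt)
    (hτX : ∀ x ∈ CX, pullback' p x ∈ CXt)
    (hτZ : ∀ x ∈ dualCode CZ, pullback' p x ∈ dualCode CZt)
    (hπZ : ∀ x ∈ dualCode CZt, fiberSum p x ∈ dualCode CZ) :
    ∃ F : (CX ⧸ (dualCode CZ).comap CX.subtype) →ₗ[ZMod 2]
          (CXt ⧸ (dualCode CZt).comap CXt.subtype),
      Function.Injective F ∧
      (∀ (x : I → ZMod 2) (hx : x ∈ CX),
        F (Submodule.Quotient.mk ⟨x, hx⟩) =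
          Submodule.Quotient.mk ⟨pullback' p x, hτX x hx⟩) ∧
      Module.finrank (ZMod 2) (CX ⧸ (dualCode CZ).comap CX.subtype) ≤
        Module.finrank (ZMod 2) (CXt ⧸ (dualCode CZt).comap CXt.subtype) := by
  have hle : (dualCode CZ).comap CX.subtype ≤
      ((dualCode CZt).comap CXt.subtype).comap ((pullback' p).restrict hτX) :=
    fun x hx => hτZ x.1 hx
  have hinj : Function.Injective (Submodule.mapQ _ _ ((pullback' p).restrict hτX) hle) := by
    rw [← LinearMap.ker_eq_bot, LinearMap.ker_eq_bot']
    intro q hq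
    obtain ⟨x, rfl⟩ := Submodule.Quotient.mk_surjective _ q
    rw [Submodule.mapQ_apply, Submodule.Quotient.mk_eq_zero] at hq
    rw [Submodule.Quotient.mk_eq_zero]
    have h := hπZ (pullback' p x.1) hq
    rwa [fiberSum_pullback' ht p hfib] at h
  exact ⟨_, hinj, fun _ _ => rfl, LinearMap.finrank_le_finrank_of_injective hinj⟩
end

section
/- Let I and Ĩ be finite types, t an odd natural number, and p : Ĩ → I a map each of whose fibers has exactly t elements; define π : (Ĩ → 𝔽₂) → (I → 𝔽₂) by (π x) i = ∑_{j ∈ p⁻¹(i)} x j and τ : (I → 𝔽₂) → (Ĩ → 𝔽₂) by (τ y) j = y (p j). Let (C_X, C_Z) be a CSS code on I → 𝔽₂ and (C̃_X, C̃_Z) a CSS code on Ĩ → 𝔽₂. Assume τ(C_X) ⊆ C̃_X, τ(C_Z^⊥) ⊆ C̃_Z^⊥, π(C̃_X) ⊆ C_X, π(C̃_Z^⊥) ⊆ C_Z^⊥, and that the dimensions agree: finrank(C̃_X ⧸ C̃_Z^⊥) = finrank(C_X ⧸ C_Z^⊥). Then for every x̃ ∈ C̃_X with x̃ ∉ C̃_Z^⊥,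 the vector π x̃ lies in C_X, does not lie in C_Z^⊥, and has Hamming weight at most the Hamming weight of x̃. Consequently the minimum Hamming weight over C̃_X \ C̃_Z^⊥ is at least the minimum over C_X \ C_Z^⊥, i.e., d̃_Z ≥ d_Z. -/
/-- The minimum Hamming weight (in `ℕ∞`, so `⊤` for the empty set) over `C \ N`. -/
noncomputable def minWeight {I : Type*} [Fintype I]
    (C N : Submodule (ZMod 2) (I → ZMod 2)) : ℕ∞ :=
  sInf {w : ℕ∞ | ∃ x, x ∈ C ∧ x ∉ N ∧ w = (hammingNorm x : ℕ∞)}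

theorem hammingNorm_fiberSum_le {I J : Type*} [Fintype I] [Fintype J] [DecidableEq I]
    (p : J → I) (x : J → ZMod 2) :
    hammingNorm (fiberSum p x) ≤ hammingNorm x := by
  unfold hammingNorm
  refine le_trans (Finset.card_le_card ?_) (Finset.card_image_le (f := p))
  intro i hi
  obtain ⟨j, hj, hxj⟩ := Finset.exists_ne_zero_of_sum_ne_zero (Finset.mem_filter.mp hi).2
  exact Finset.mem_image.mpr ⟨j, by simpa using hxj, (Finset.mem_filter.mp hj).2⟩

/-- If `f` maps `A` onto `A'` and `N` into `N'`, and `A ⧸ (A ⊓ N)`, `A' ⧸ (A' ⊓ N')` have equal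
dimension, then `f` reflects membership in `N'` to membership in `N` on `A`: the induced map of
quotients is surjective, hence injective. -/
theorem mem_of_map_mem_of_finrank_quotient_eq {K V W : Type*} [Field K]
    [AddCommGroup V] [Module K V] [AddCommGroup W] [Module K W]
    [FiniteDimensional K V] [FiniteDimensional K W]
    (f : V →ₗ[K] W) (A N : Submodule K V) (A' N' : Submodule K W)
    (hA : ∀ x ∈ A, f x ∈ A') (hN : ∀ x ∈ N, f x ∈ N')
    (hsurj : ∀ y ∈ A', ∃ x ∈ A, f x = y)
    (hdim : Module.finrank K (A ⧸ N.comap A.subtype) =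
      Module.finrank K (A' ⧸ N'.comap A'.subtype))
    {x : V} (hx : x ∈ A) (hfx : f x ∈ N') : x ∈ N := by
  let g : (A ⧸ N.comap A.subtype) →ₗ[K] (A' ⧸ N'.comap A'.subtype) :=
    Submodule.mapQ _ _ (f.restrict hA) fun z hz => hN z hz
  have hg : Function.Surjective g := by
    intro q
    obtain ⟨y, rfl⟩ := Submodule.mkQ_surjective _ q
    obtain ⟨z, hz, hzy⟩ := hsurj y y.2
    refine ⟨Submodule.Quotient.mk ⟨z, hz⟩, ?_⟩
    exact congrArg Submodule.Quotient.mk (Subtype.ext hzy)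
  have hinj : Function.Injective g :=
    (LinearMap.injective_iff_surjective_of_finrank_eq_finrank hdim).mpr hg
  have h0 : g (Submodule.Quotient.mk ⟨x, hx⟩) = 0 :=
    (Submodule.Quotient.mk_eq_zero _).mpr hfx
  exact (Submodule.Quotient.mk_eq_zero (N.comap A.subtype)).mp (hinj (h0.trans (map_zero g).symm))

/-- Distance lower bound for lifted CSS codes: if a Galois lift of odd index `t` preserves the
code dimension, then the projection of any logical representative of the lifted code is a
logical representative of the base code of no larger weight; consequently `d̃_Z ≥ d_Z`. -/
theorem cssLift_distance_lower_bound
    {I J : Type*} [Fintype I] [Fintype J] [DecidableEq I]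
    (t : ℕ) (ht : Odd t) (p : J → I)
    (hfib : ∀ i : I, (Finset.univ.filter (fun j => p j = i)).card = t)
    (CX CZ : Submodule (ZMod 2) (I → ZMod 2))
    (CXt CZt : Submodule (ZMod 2) (J → ZMod 2))
    (hCSS : dualCode CX ≤ CZ)
    (hCSSt : dualCode CXt ≤ CZt)
    (hτX : ∀ x ∈ CX, pullback' p x ∈ CXt)
    (hτZ : ∀ x ∈ dualCode CZ, pullback' p x ∈ dualCode CZt)
    (hπX : ∀ x ∈ CXt, fiberSum p x ∈ CX)
    (hπZ : ∀ x ∈ dualCode CZt, fiberSum p x ∈ dualCode CZ)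
    (hdim : Module.finrank (ZMod 2) (CXt ⧸ (dualCode CZt).comap CXt.subtype) =
      Module.finrank (ZMod 2) (CX ⧸ (dualCode CZ).comap CX.subtype)) :
    (∀ x ∈ CXt, x ∉ dualCode CZt →
      fiberSum p x ∈ CX ∧ fiberSum p x ∉ dualCode CZ ∧
        hammingNorm (fiberSum p x) ≤ hammingNorm x) ∧
    minWeight CX (dualCode CZ) ≤ minWeight CXt (dualCode CZt) := by
  have key : ∀ x ∈ CXt, x ∉ dualCode CZt →
      fiberSum p x ∈ CX ∧ fiberSum p x ∉ dualCode CZ ∧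
        hammingNorm (fiberSum p x) ≤ hammingNorm x := fun x hx hxn =>
    ⟨hπX x hx,
      fun h => hxn <| mem_of_map_mem_of_finrank_quotient_eq (fiberSum p) CXt (dualCode CZt) CX
        (dualCode CZ) hπX hπZ
        (fun y hy => ⟨pullback' p y, hτX y hy, fiberSum_pullback' ht p hfib y⟩) hdim hx h,
      hammingNorm_fiberSum_le p x⟩
  refine ⟨key, le_sInf ?_⟩
  rintro _ ⟨x, hx, hxn, rfl⟩
  obtain ⟨h1, h2, h3⟩ := key x hx hxn
  exact le_trans (sInf_le ⟨fiberSum p x, h1, h2, rfl⟩) (Nat.cast_le.mpr h3)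
end

section
/- Let a and b be finite types and let C be a submodule of a → 𝔽₂ and D a submodule of b → 𝔽₂. Define the tensor-product code C ⊗ D as the submodule of (a × b) → 𝔽₂ spanned by the outer products {fun (i, j) => c i * d j : c ∈ C, d ∈ D}. Then, with duals taken with respect to the standard dot products, the dual of the tensor-product code satisfies (C ⊗ D)^⊥ = (C^⊥ ⊗ ⊤) + (⊤ ⊗ D^⊥), where ⊤ denotes the full space (b → 𝔽₂, respectively a → 𝔽₂); that is, the dual of the span of outer products of C and D equals the sum of the span of outer products of C^⊥ with arbitrary vectors and of arbitrary vectors with D^⊥. -/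
/-- The tensor-product code `C ⊗ D ⊆ (a × b) → 𝔽₂`: the span of the outer products of
codewords of `C` and codewords of `D`. -/
def tensorCode {a b : Type*} (C : Submodule (ZMod 2) (a → ZMod 2))
    (D : Submodule (ZMod 2) (b → ZMod 2)) :
    Submodule (ZMod 2) (a × b → ZMod 2) :=
  Submodule.span (ZMod 2)
    {f | ∃ c ∈ C, ∃ d ∈ D, f = fun q : a × b => c q.1 * d q.2}

open Matrix in
/-- The matrix of a linear projection onto `C`: its columns lie in `C`, and it fixes `C`. -/
lemma exists_projection_matrix {I : Type*} [Fintype I] (C : Submodule (ZMod 2) (I → ZMod 2)) :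
    ∃ R : Matrix I I (ZMod 2), (∀ k, (fun i => R i k) ∈ C) ∧ ∀ c ∈ C, R *ᵥ c = c := by
  classical
  obtain ⟨p, hp⟩ := C.subtype.exists_leftInverse_of_injective C.ker_subtype
  refine ⟨LinearMap.toMatrix' (C.subtype ∘ₗ p), fun k => ?_, fun c hc => ?_⟩
  · have h : (fun i => LinearMap.toMatrix' (C.subtype ∘ₗ p) i k) =
        (p (Pi.single k 1) : I → ZMod 2) := by
      ext i
      simp [LinearMap.toMatrix'_apply]
    rw [h]
    exact (p _).2
  · rw [LinearMap.toMatrix'_mulVec]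
    exact congrArg Subtype.val (LinearMap.congr_fun hp ⟨c, hc⟩)

open Matrix in
/-- For a projection `R` onto `C`, `⟨y - Rᵀ y, c⟩ = ⟨y, c - R c⟩ = 0`. -/
lemma sub_mulVec_mem_dualCode {I : Type*} [Fintype I] {C : Submodule (ZMod 2) (I → ZMod 2)}
    {R : Matrix I I (ZMod 2)} (hR : ∀ c ∈ C, R *ᵥ c = c) (y : I → ZMod 2) :
    y - y ᵥ* R ∈ dualCode C := by
  intro c hc
  change (y - y ᵥ* R) ⬝ᵥ c = 0
  rw [sub_dotProduct, ← dotProduct_mulVec, hR c hc, sub_self]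

lemma mem_dualCode_tensorCode {a b : Type*} [Fintype a] [Fintype b]
    {C : Submodule (ZMod 2) (a → ZMod 2)} {D : Submodule (ZMod 2) (b → ZMod 2)}
    {x : a × b → ZMod 2} :
    x ∈ dualCode (tensorCode C D) ↔
      ∀ c ∈ C, ∀ d ∈ D, ∑ i, ∑ j, x (i, j) * (c i * d j) = 0 := by
  constructor
  · intro h c hc d hd
    rw [← Fintype.sum_prod_type (fun q : a × b => x q * (c q.1 * d q.2))]
    exact h _ (Submodule.subset_span ⟨c, hc, d, hd, rfl⟩)
  · intro h y hy
    induction hy using Submodule.span_induction with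
    | mem y hy =>
      obtain ⟨c, hc, d, hd, rfl⟩ := hy
      rw [Fintype.sum_prod_type]
      exact h c hc d hd
    | zero => simp
    | add y z _ _ hy hz => simp [mul_add, Finset.sum_add_distrib, hy, hz]
    | smul t y _ hy =>
      simp only [Pi.smul_apply, smul_eq_mul, mul_left_comm _ t, ← Finset.mul_sum]
      rw [hy, mul_zero]

lemma mem_tensorCode_top_of_columns {a b : Type*} [Fintype b]
    {C : Submodule (ZMod 2) (a → ZMod 2)} {x : a × b → ZMod 2}
    (h : ∀ j, (fun i => x (i, j)) ∈ C) : x ∈ tensorCode C ⊤ := by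
  classical
  have hx : x = ∑ j, fun q : a × b => x (q.1, j) * (Pi.single j 1 : b → ZMod 2) q.2 := by
    ext ⟨i, j⟩
    simp [Finset.sum_apply, Pi.single_apply]
  rw [hx]
  exact Submodule.sum_mem _ fun j _ => Submodule.subset_span ⟨_, h j, _, trivial, rfl⟩

lemma mem_top_tensorCode_of_rows {a b : Type*} [Fintype a]
    {D : Submodule (ZMod 2) (b → ZMod 2)} {x : a × b → ZMod 2}
    (h : ∀ i, (fun j => x (i, j)) ∈ D) : x ∈ tensorCode ⊤ D := by
  classical
  have hx : x = ∑ i, fun q : a × b => (Pi.single i 1 : a → ZMod 2) q.1 * x (i, q.2) := by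
    ext ⟨i, j⟩
    simp [Finset.sum_apply, Pi.single_apply]
  rw [hx]
  exact Submodule.sum_mem _ fun i _ => Submodule.subset_span ⟨_, trivial, _, h i, rfl⟩

/-- The pairing of two outer products is the product of the pairings of the factors. -/
lemma sum_outer_mul_outer {a b : Type*} [Fintype a] [Fintype b]
    (u c : a → ZMod 2) (v d : b → ZMod 2) :
    ∑ i, ∑ j, u i * v j * (c i * d j) = (∑ i, u i * c i) * ∑ j, v j * d j := by
  rw [Finset.sum_mul_sum]
  exact Finset.sum_congr rfl fun i _ => Finset.sum_congr rfl fun j _ => mul_mul_mul_comm _ _ _ _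

/-- Dual of a tensor-product code: `(C ⊗ D)^⊥ = C^⊥ ⊗ ⊤ + ⊤ ⊗ D^⊥`. -/
theorem dual_tensorCode {a b : Type*} [Fintype a] [Fintype b]
    (C : Submodule (ZMod 2) (a → ZMod 2)) (D : Submodule (ZMod 2) (b → ZMod 2)) :
    dualCode (tensorCode C D) =
      tensorCode (dualCode C) (⊤ : Submodule (ZMod 2) (b → ZMod 2)) +
        tensorCode (⊤ : Submodule (ZMod 2) (a → ZMod 2)) (dualCode D) := by
  rw [Submodule.add_eq_sup]
  apply le_antisymm
  · intro x hx
    rw [mem_dualCode_tensorCode] at hx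
    obtain ⟨R, hRC, hR⟩ := exists_projection_matrix C
    obtain ⟨S, hSD, hS⟩ := exists_projection_matrix D
    -- `N` is the matrix `Rᵀ M`, where `M` is the matrix of `x`.
    let N : a → b → ZMod 2 := fun i j => Matrix.vecMul (fun k => x (k, j)) R i
    have hNS : ∀ i, Matrix.vecMul (N i) S = 0 := by
      intro i
      ext j
      simp only [N, Matrix.vecMul, dotProduct, Pi.zero_apply, Finset.sum_mul]
      rw [Finset.sum_comm, ← hx _ (hRC i) _ (hSD j)]
      simp only [mul_assoc]
    refine Submodule.mem_sup.2 ⟨fun q => x q - N q.1 q.2, ?_, fun q => N q.1 q.2, ?_, ?_⟩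
    · exact mem_tensorCode_top_of_columns fun j => sub_mulVec_mem_dualCode hR fun k => x (k, j)
    · refine mem_top_tensorCode_of_rows fun i => ?_
      simpa [hNS i] using sub_mulVec_mem_dualCode hS (N i)
    · ext q
      simp
  · refine sup_le (Submodule.span_le.2 ?_) (Submodule.span_le.2 ?_)
    · rintro _ ⟨u, hu, v, -, rfl⟩
      refine mem_dualCode_tensorCode.2 fun c hc d _ => ?_
      rw [sum_outer_mul_outer, hu c hc, zero_mul]
    · rintro _ ⟨u, -, v, hv, rfl⟩
      refine mem_dualCode_tensorCode.2 fun c _ d hd => ?_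
      rw [sum_outer_mul_outer, hv d hd, mul_zero]
end

section
/- Let ℓ ≥ 1 and let a, b : ZMod ℓ → 𝔽₂ be vectors whose cyclic convolution vanishes: for every k ∈ ZMod ℓ, ∑_{i ∈ ZMod ℓ} a i * b (k - i) = 0. Let s denote the cyclic shift, (s v) i = v (i - 1), and let b̄ j = b (-j) be the cyclic reversal of b. Define the 2ℓ × 2ℓ block matrices H_X = fromBlocks (circulant (s a)) (circulant a) (circulant a) (circulant a) and H_Z = fromBlocks (circulant b̄) (circulant b̄) (circulant (s b̄)) (circulant b̄). Then H_X * H_Zᵀ = 0. -/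
open Matrix

/-! Every block of `H_X * H_Zᵀ` is a sum of two products of a shift of `circulant a` with the
transpose of a shift of `circulant b̄`. Transposition undoes the reversal, so each entry of such a
product is one coefficient of the cyclic convolution of `a` and `b`; hence all these products vanish
separately and no cancellation between them is needed. -/

/-- The entry at `(i, j)` is the coefficient of the convolution at `i - c - (j - d)`, so the shifts
`c` and `d` only permute the coefficients. -/
lemma circulant_shift_mul_transpose_eq_zero {ℓ : ℕ} [NeZero ℓ] {a b : ZMod ℓ → ZMod 2}
    (hconv : ∀ k : ZMod ℓ, ∑ i : ZMod ℓ, a i * b (k - i) = 0) (c d : ZMod ℓ) :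
    circulant (fun i => a (i - c)) * (circulant (fun j => b (-(j - d))))ᵀ = 0 := by
  ext i j
  simp only [mul_apply, transpose_apply, circulant_apply, Matrix.zero_apply]
  rw [← hconv (i - c - (j - d))]
  refine Fintype.sum_equiv (Equiv.subLeft (i - c)) _ _ fun k => ?_
  simp only [Equiv.subLeft_apply]
  congr 2 <;> ring

/-- CSS orthogonality `H_X · H_Zᵀ = 0` for the block-circulant parity-check matrices of the
quantum Tanner code built on the square complex associated with `L(ℓ) = ⟨a, b | a^ℓ b^{-ℓ}⟩`,
where the cyclic convolution of `a` and `b` vanishes, `s` is the cyclic shift and `b̄` the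
cyclic reversal of `b`. -/
theorem blockCirculant_css_orthogonality
    (ℓ : ℕ) [NeZero ℓ] (a b : ZMod ℓ → ZMod 2)
    (hconv : ∀ k : ZMod ℓ, ∑ i : ZMod ℓ, a i * b (k - i) = 0) :
    Matrix.fromBlocks
        (Matrix.circulant (fun i : ZMod ℓ => a (i - 1))) (Matrix.circulant a)
        (Matrix.circulant a) (Matrix.circulant a) *
      (Matrix.fromBlocks
        (Matrix.circulant (fun j : ZMod ℓ => b (-j)))
        (Matrix.circulant (fun j : ZMod ℓ => b (-j)))
        (Matrix.circulant (fun i : ZMod ℓ => b (-(i - 1))))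
        (Matrix.circulant (fun j : ZMod ℓ => b (-j))))ᵀ = 0 := by
  have h₀₀ := circulant_shift_mul_transpose_eq_zero hconv 0 0
  have h₀₁ := circulant_shift_mul_transpose_eq_zero hconv 0 1
  have h₁₀ := circulant_shift_mul_transpose_eq_zero hconv 1 0
  have h₁₁ := circulant_shift_mul_transpose_eq_zero hconv 1 1
  simp only [sub_zero] at h₀₀ h₀₁ h₁₀
  rw [fromBlocks_transpose, fromBlocks_multiply, h₀₀, h₀₁, h₁₀, h₁₁, add_zero, fromBlocks_zero]
end
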